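/- If q is a prime and a, b are integers with f(a) ≡ f(b) ≡ 0 (mod q), then F(a − b) ≡ 0 (mod q). -/

import Mathlib

open scoped BigOperators Classical

noncomputable section

/-!
Write `g = t f`, of degree `d`. By the product formula, the resultant in `y` of `g(y)` and
`g(y + x)` is `c ^ (2 d) * ∏_{i,j} (x - (r i - r j))`, so `F(x)` is an integer multiple of it. On
the other hand a resultant of `p` and `q` has the form `p u + q v`; for `x = a - b`, evaluating this
identity at `y = b` exhibits the resultant as an integral linear combination of `g(b)` and `g(a)`.
-/

section

open Polynomial

variable {R S K ι : Type*} [CommRing R] [CommRing S] [CommRing K] [Fintype ι]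

/-- The polynomial `F` of the theorem, whose roots are the differences `r i - r j`, for a
family `r` indexed by an arbitrary finite type of cardinality `d`. -/
def rootDifferencePoly (c : K) (r : ι → K) : K[X] :=
  C (c ^ (Fintype.card ι ^ 2 + Fintype.card ι)) * ∏ ij : ι × ι, (X - C (r ij.1 - r ij.2))

theorem resultant_mem_of_eval_mem {I : Ideal R} {p q : R[X]} {m n : ℕ} {x : R}
    (hp : p.natDegree ≤ m) (hq : q.natDegree ≤ n) (hmn : m ≠ 0 ∨ n ≠ 0)
    (hpx : p.eval x ∈ I) (hqx : q.eval x ∈ I) : p.resultant q m n ∈ I := by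
  obtain ⟨u, v, -, -, huv⟩ := exists_mul_add_mul_eq_C_resultant p q hp hq hmn
  have hx : p.eval x * u.eval x + q.eval x * v.eval x = p.resultant q m n := by
    simpa only [eval_add, eval_mul, eval_C] using congrArg (eval x) huv
  rw [← hx]
  exact I.add_mem (I.mul_mem_right _ hpx) (I.mul_mem_right _ hqx)

theorem natDegree_C_mul_prod_X_sub_C_le (c : K) (r : ι → K) :
    (C c * ∏ i, (X - C (r i))).natDegree ≤ Fintype.card ι := by
  nontriviality K
  exact (natDegree_C_mul_le _ _).trans_eq (natDegree_finsetProd_X_sub_C_eq_card Finset.univ r)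

theorem coeff_card_C_mul_prod_X_sub_C (c : K) (r : ι → K) :
    (C c * ∏ i, (X - C (r i))).coeff (Fintype.card ι) = c := by
  nontriviality K
  have hmonic := (monic_prod_X_sub_C r Finset.univ).coeff_natDegree
  rw [natDegree_finsetProd_X_sub_C_eq_card, Finset.card_univ] at hmonic
  rw [coeff_C_mul, hmonic, mul_one]

theorem resultant_C_mul_prod_X_sub_C_left (c : K) (r : ι → K) {q : K[X]} {n : ℕ}
    (hq : q.natDegree ≤ n) :
    (C c * ∏ i, (X - C (r i))).resultant q (Fintype.card ι) n = c ^ n * ∏ i, q.eval (r i) := by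
  nontriviality K
  have hlinear (i : ι) : (X - C (r i)).resultant q 1 n = q.eval (r i) := by
    have h := resultant_X_sub_C_pow_left (r i) q 1 n hq
    rwa [pow_one, pow_one] at h
  have hprod := resultant_prod_left Finset.univ (fun i ↦ X - C (r i)) q n (by simp) hq
  simp only [natDegree_finsetProd_X_sub_C_eq_card, Finset.card_univ, natDegree_X_sub_C,
    hlinear] at hprod
  rw [resultant_C_mul_left, hprod]

theorem resultant_taylor_C_mul_prod_X_sub_C (c x : K) (r : ι → K) {p : K[X]}
    (hp : p = C c * ∏ i, (X - C (r i))) :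
    p.resultant (taylor x p) (Fintype.card ι) (Fintype.card ι) =
      c ^ (2 * Fintype.card ι) * ∏ ij : ι × ι, (x - (r ij.1 - r ij.2)) := by
  have heval (i : ι) : (taylor x p).eval (r i) = c * ∏ j, (x - (r j - r i)) := by
    rw [taylor_eval, hp, eval_mul, eval_C, eval_prod]
    congr! 2 with j
    rw [eval_sub, eval_X, eval_C]
    ring
  have hdeg : (taylor x p).natDegree ≤ Fintype.card ι := by
    rw [natDegree_taylor, hp]
    exact natDegree_C_mul_prod_X_sub_C_le c r
  have hres := resultant_C_mul_prod_X_sub_C_left c r hdeg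
  rw [← hp] at hres
  simp_rw [hres, heval]
  rw [Finset.prod_mul_distrib, Finset.prod_const, Finset.card_univ, ← mul_assoc, ← pow_add,
    ← two_mul, Fintype.prod_prod_type_right]

theorem eval_rootDifferencePoly (c x : K) (r : ι → K) {p : K[X]}
    (hp : p = C c * ∏ i, (X - C (r i))) :
    (rootDifferencePoly c r).eval x = c ^ (Fintype.card ι * (Fintype.card ι - 1)) *
      p.resultant (taylor x p) (Fintype.card ι) (Fintype.card ι) := by
  have hexp : Fintype.card ι ^ 2 + Fintype.card ι =
      Fintype.card ι * (Fintype.card ι - 1) + 2 * Fintype.card ι := by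
    cases Fintype.card ι with
    | zero => rfl
    | succ n => rw [Nat.add_sub_cancel]; ring
  rw [resultant_taylor_C_mul_prod_X_sub_C c x r hp, rootDifferencePoly, hexp, pow_add]
  simp only [eval_mul, eval_C, eval_prod, eval_sub, eval_X, mul_assoc]

theorem mem_of_algebraMap_eq_eval_rootDifferencePoly [Algebra R K] [FaithfulSMul R K] [Nonempty ι]
    {g : R[X]} {c : K} {r : ι → K}
    (hg : g.map (algebraMap R K) = C c * ∏ i, (X - C (r i))) {I : Ideal R} {a b v : R}
    (ha : g.eval a ∈ I) (hb : g.eval b ∈ I)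
    (hv : algebraMap R K v = (rootDifferencePoly c r).eval (algebraMap R K (a - b))) : v ∈ I := by
  have hinj := FaithfulSMul.algebraMap_injective R K
  set d := Fintype.card ι
  have hdeg : g.natDegree ≤ d := by
    rw [← natDegree_map_eq_of_injective hinj, hg]
    exact natDegree_C_mul_prod_X_sub_C_le c r
  have hcoeff : algebraMap R K (g.coeff d) = c := by
    rw [← coeff_map, hg, coeff_card_C_mul_prod_X_sub_C]
  have hv_eq : v = g.coeff d ^ (d * (d - 1)) * g.resultant (taylor (a - b) g) d d := by
    apply hinj
    rw [hv, eval_rootDifferencePoly c _ r hg, ← map_taylor, resultant_map_map, map_mul, map_pow,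
      hcoeff]
  rw [hv_eq]
  refine I.mul_mem_left _ (resultant_mem_of_eval_mem (x := b) hdeg ?_ ?_ hb ?_)
  · rwa [natDegree_taylor]
  · exact Or.inl Fintype.card_ne_zero
  · rwa [taylor_eval, add_sub_cancel]

theorem stmt7_general [Algebra R S] [Algebra S K] [Algebra R K] [IsScalarTower R S K]
    [FaithfulSMul R K] [Nonempty ι] (f : S[X]) (t : R)
    (htf : ∀ n : ℕ, ∃ m : R, algebraMap R S t * f.coeff n = algebraMap R S m) (c : K) (r : ι → K)
    (hroots : (C (algebraMap R S t) * f).map (algebraMap S K) = C c * ∏ i, (X - C (r i)))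
    (I : Ideal R) {a b va vb vF : R} (hva : algebraMap R S va = f.eval (algebraMap R S a))
    (hvb : algebraMap R S vb = f.eval (algebraMap R S b)) (ha : va ∈ I) (hb : vb ∈ I)
    (hvF : algebraMap R K vF = (rootDifferencePoly c r).eval (algebraMap R K (a - b))) :
    vF ∈ I := by
  obtain ⟨g, hg⟩ : C (algebraMap R S t) * f ∈ lifts (algebraMap R S) :=
    (lifts_iff_coeff_lifts _).2 fun n ↦ (htf n).imp fun m hm ↦ by rw [coeff_C_mul, hm]
  rw [coe_mapRingHom] at hg
  have hinj : Function.Injective (algebraMap R S) := by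
    apply Function.Injective.of_comp (f := algebraMap S K)
    rw [← RingHom.coe_comp, ← IsScalarTower.algebraMap_eq]
    exact FaithfulSMul.algebraMap_injective R K
  have heval {x v : R} (hv : algebraMap R S v = f.eval (algebraMap R S x)) :
      g.eval x = t * v := by
    apply hinj
    rw [← eval_map_apply, hg, eval_mul, eval_C, map_mul, hv]
  refine mem_of_algebraMap_eq_eval_rootDifferencePoly (g := g) (a := a) (b := b) ?_ ?_ ?_ hvF
  · rw [IsScalarTower.algebraMap_eq R S K, ← map_map, hg, hroots]
  · exact heval hva ▸ I.mul_mem_left t ha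
  · exact heval hvb ▸ I.mul_mem_left t hb

end

/-- **Lemma (ii).**  If `q` is a prime and `a, b` are integers with
`f(a) ≡ f(b) ≡ 0 (mod q)`, then `F(a-b) ≡ 0 (mod q)`.  (Here `f(a), f(b)` and
`F(a-b)` are the integers `va, vb, vF` equal to the corresponding values.) -/
theorem stmt7 (f : Polynomial ℚ) (d : ℕ) (hdeg : f.natDegree = d) (hd1 : 1 ≤ d)
    (hint : ∀ n : ℤ, ∃ m : ℤ, f.eval (n : ℚ) = (m : ℚ))
    (hlead : 0 < f.leadingCoeff)
    (hirr : Irreducible f)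
    -- `t` is the minimal positive integer with `t·f ∈ ℤ[x]`
    (t : ℕ) (ht : 0 < t)
    (htf : ∀ n : ℕ, ∃ m : ℤ, (t : ℚ) * f.coeff n = (m : ℚ))
    (htmin : ∀ t' : ℕ, 0 < t' → (∀ n : ℕ, ∃ m : ℤ, (t' : ℚ) * f.coeff n = (m : ℚ)) → t ≤ t')
    -- `c` is the leading coefficient of `f̃ = t·f` and `r 0, …, r (d-1)` its complex roots
    (c : ℂ) (hc : c = (t : ℂ) * (f.map (algebraMap ℚ ℂ)).leadingCoeff)
    (r : Fin d → ℂ)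
    (hroots : (Polynomial.C (t : ℚ) * f).map (algebraMap ℚ ℂ)
      = Polynomial.C c * ∏ i : Fin d, (Polynomial.X - Polynomial.C (r i)))
    -- `F(x) = c^{d²+d} ∏_{1 ≤ i,j ≤ d} (x - (r_i - r_j))`
    (F : Polynomial ℂ)
    (hF : F = Polynomial.C (c ^ (d ^ 2 + d)) *
      ∏ ij : Fin d × Fin d, (Polynomial.X - Polynomial.C (r ij.1 - r ij.2)))
    :
    ∀ q : ℕ, q.Prime → ∀ a b : ℤ,
      ∀ va vb : ℤ, (va : ℚ) = f.eval (a : ℚ) → (vb : ℚ) = f.eval (b : ℚ) →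
        (q : ℤ) ∣ va → (q : ℤ) ∣ vb →
        ∀ vF : ℤ, (vF : ℂ) = F.eval ((a - b : ℤ) : ℂ) → (q : ℤ) ∣ vF := by
  intro q _ a b va vb hva hvb hqa hqb vF hvF
  have : NeZero d := ⟨Nat.one_le_iff_ne_zero.1 hd1⟩
  simp only [← Ideal.mem_span_singleton] at hqa hqb ⊢
  exact stmt7_general f (t : ℤ) (by simpa using htf) c r (by simpa using hroots) _ hva hvb hqa hqb
    (by simpa [rootDifferencePoly, hF] using hvF)

end
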